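/- For every integer r ≥ 1 and every natural number N there exists a finite connected simple graph G that is 3-regular (cubic), 2-connected, has more than N vertices, and contains at least 2^r distinct Šoltés vertices. Consequently, for every r ≥ 1 there exist infinitely many cubic 2-connected graphs with at least 2^r Šoltés vertices. -/

import Mathlib

open SimpleGraph Finset

/-- A `Fintype` instance for the vertex set of a vertex-deleted subgraph. -/
noncomputable instance instFintypeNe {V : Type*} [Fintype V] (v : V) :
    Fintype {u : V // u ≠ v} :=
  (Set.toFinite {u : V | u ≠ v}).fintype

/-- The graph obtained from `G` by deleting the vertex `v` (an induced subgraph). -/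
def deleteVertex {V : Type*} (G : SimpleGraph V) (v : V) :
    SimpleGraph {u : V // u ≠ v} :=
  G.induce {u : V | u ≠ v}

/-- The Wiener index of a finite simple graph: the sum of distances over all
unordered pairs of vertices. -/
noncomputable def wiener {V : Type*} [Fintype V] (G : SimpleGraph V) : ℕ :=
  (∑ u : V, ∑ v : V, G.dist u v) / 2

/-- `v` is a Šoltés vertex of `G` if `G - v` is connected and has the same Wiener index. -/
def IsSoltes {V : Type*} [Fintype V] (G : SimpleGraph V) (v : V) : Prop :=
  (deleteVertex G v).Connected ∧ wiener (deleteVertex G v) = wiener G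

/-- A graph is cubic (3-regular) if every vertex has exactly 3 neighbours. -/
def IsCubic {V : Type*} (G : SimpleGraph V) : Prop :=
  ∀ v : V, (G.neighborSet v).ncard = 3

/-- A finite graph is 2-connected if it is connected, has at least 3 vertices,
and stays connected after deleting any one vertex. -/
def TwoConnected {V : Type*} [Fintype V] (G : SimpleGraph V) : Prop :=
  G.Connected ∧ 3 ≤ Fintype.card V ∧ ∀ v : V, (deleteVertex G v).Connected

/-! ### Distances from potentials -/

theorem dist_ge_of_lipschitz {V : Type*} {G : SimpleGraph V} (f : V → ℕ)
    (hf : ∀ a b, G.Adj a b → f b ≤ f a + 1) {u w : V} (h : G.Reachable u w) :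
    f w ≤ f u + G.dist u w := by
  obtain ⟨p, hp⟩ := h.exists_walk_length_eq_dist
  rw [← hp]
  clear hp h
  induction p with
  | nil => simp
  | cons hadj p ih =>
    have := hf _ _ hadj
    simp only [Walk.length_cons]
    omega

/-- Descending along a potential. -/
theorem exists_zero_of_descent {V : Type*} {G : SimpleGraph V} (f : V → ℕ)
    (hd : ∀ w, f w ≠ 0 → ∃ w', G.Adj w w' ∧ f w' + 1 = f w) (w : V) :
    ∃ z, f z = 0 ∧ G.Reachable z w ∧ G.dist z w ≤ f w := by
  induction hn : f w using Nat.strong_induction_on generalizing w with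
  | _ n ih =>
    by_cases h0 : f w = 0
    · exact ⟨w, h0, Reachable.refl _, by simp⟩
    · obtain ⟨w', hadj, hw'⟩ := hd w h0
      obtain ⟨z, hz, hr, hle⟩ := ih (f w') (by omega) w' rfl
      refine ⟨z, hz, hr.trans hadj.symm.reachable, ?_⟩
      obtain ⟨p, hp⟩ := hr.exists_walk_length_eq_dist
      have := dist_le (p.concat hadj.symm)
      rw [Walk.length_concat] at this
      omega

theorem dist_eq_of_potential {V : Type*} {G : SimpleGraph V} (u : V) (f : V → ℕ)
    (h0 : ∀ w, f w = 0 ↔ w = u)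
    (hf : ∀ a b, G.Adj a b → f b ≤ f a + 1)
    (hd : ∀ w, w ≠ u → ∃ w', G.Adj w w' ∧ f w' + 1 = f w) (w : V) :
    G.Reachable u w ∧ G.dist u w = f w := by
  obtain ⟨z, hz, hr, hle⟩ := exists_zero_of_descent (G := G) f
    (fun w hw => hd w (fun h => hw ((h0 w).2 h))) w
  obtain rfl := (h0 z).1 hz
  have := dist_ge_of_lipschitz f hf hr
  exact ⟨hr, by omega⟩

/-- A vertex different from `u` has a neighbour which is closer to `u`. -/
theorem exists_closer {V : Type*} {G : SimpleGraph V} (hG : G.Connected) (u w : V) (h : w ≠ u) :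
    ∃ w', G.Adj w w' ∧ G.dist u w' + 1 = G.dist u w := by
  obtain ⟨p, hp⟩ := hG.exists_walk_length_eq_dist w u
  cases p with
  | nil => exact absurd rfl h
  | cons hadj p =>
    rename_i w'
    refine ⟨w', hadj, ?_⟩
    have h1 := dist_le p
    have h2 := hG.dist_triangle (u := w) (v := w') (w := u)
    have h3 : G.dist w w' ≤ 1 := by simpa using dist_le (Walk.cons hadj Walk.nil)
    rw [Walk.length_cons] at hp
    rw [dist_comm, G.dist_comm (u := u)]
    omega

theorem dist_lip {V : Type*} {G : SimpleGraph V} (hG : G.Connected) (u a b : V)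
    (h : G.Adj a b) : G.dist u b ≤ G.dist u a + 1 := by
  have h2 := hG.dist_triangle (u := u) (v := a) (w := b)
  have h3 : G.dist a b ≤ 1 := by simpa using dist_le (Walk.cons h Walk.nil)
  omega

/-! ### Gluing two graphs along two edges -/

/-- Disjoint union of `H` and `K` together with the two edges `xs` and `yt`. -/
def glue {C T : Type*} (H : SimpleGraph C) (K : SimpleGraph T) (x y : C) (s t : T) :
    SimpleGraph (C ⊕ T) where
  Adj u w := match u, w with
    | .inl a, .inl b => H.Adj a b
    | .inr a, .inr b => K.Adj a b
    | .inl a, .inr b => (a = x ∧ b = s) ∨ (a = y ∧ b = t)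
    | .inr b, .inl a => (a = x ∧ b = s) ∨ (a = y ∧ b = t)
  symm := ⟨by
    rintro (a | a) (b | b) h
    · exact H.adj_symm h
    · exact h
    · exact h
    · exact K.adj_symm h⟩
  loopless := ⟨by
    rintro (a | a) h
    · exact H.loopless.irrefl _ h
    · exact K.loopless.irrefl _ h⟩

section glue
variable {C T : Type*} {H : SimpleGraph C} {K : SimpleGraph T} {x y : C} {s t : T}

@[simp] theorem glue_ll (a b : C) : (glue H K x y s t).Adj (.inl a) (.inl b) ↔ H.Adj a b := Iff.rfl
@[simp] theorem glue_rr (a b : T) : (glue H K x y s t).Adj (.inr a) (.inr b) ↔ K.Adj a b := Iff.rfl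
@[simp] theorem glue_lr (a : C) (b : T) : (glue H K x y s t).Adj (.inl a) (.inr b) ↔
    (a = x ∧ b = s) ∨ (a = y ∧ b = t) := Iff.rfl
@[simp] theorem glue_rl (a : C) (b : T) : (glue H K x y s t).Adj (.inr b) (.inl a) ↔
    (a = x ∧ b = s) ∨ (a = y ∧ b = t) := Iff.rfl

/-- Swapping the two sides. -/
def glueSwap : glue H K x y s t ≃g glue K H s t x y where
  toEquiv := Equiv.sumComm C T
  map_rel_iff' := by
    rintro (a | a) (b | b) <;> simp [and_comm]

theorem glue_dist_l (hH : H.Connected) (hK : K.Connected) (hxy : H.dist x y ≤ 2)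
    (hst : K.dist s t ≤ 2) (c : C) (w : C ⊕ T) :
    (glue H K x y s t).Reachable (.inl c) w ∧ (glue H K x y s t).dist (.inl c) w =
      Sum.elim (fun c' => H.dist c c')
        (fun τ => 1 + min (H.dist c x + K.dist s τ) (H.dist c y + K.dist t τ)) w := by
  apply dist_eq_of_potential
  · rintro (a | a)
    · simp only [Sum.elim_inl, Sum.inl.injEq]
      rw [hH.dist_eq_zero_iff]; exact eq_comm
    · simp
  · rintro (a | a) (b | b) h
    · exact dist_lip hH _ _ _ h
    · have h1 := hH.dist_triangle (u := c) (v := x) (w := y)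
      have h2 := hH.dist_triangle (u := c) (v := y) (w := x)
      rw [H.dist_comm (u := y)] at h2
      have h3 : K.dist t s = K.dist s t := dist_comm
      rcases h with ⟨rfl, rfl⟩ | ⟨rfl, rfl⟩ <;> simp <;> omega
    · have h1 := hH.dist_triangle (u := c) (v := x) (w := y)
      have h2 := hH.dist_triangle (u := c) (v := y) (w := x)
      rw [H.dist_comm (u := y)] at h2
      have h3 : K.dist t s = K.dist s t := dist_comm
      rcases h with ⟨rfl, rfl⟩ | ⟨rfl, rfl⟩ <;> simp <;> omega
    · have h1 := dist_lip hK s _ _ h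
      have h2 := dist_lip hK t _ _ h
      simp only [Sum.elim_inr]
      omega
  · rintro (a | a) h
    · obtain ⟨w', h1, h2⟩ := exists_closer hH c a (by simpa using h)
      exact ⟨.inl w', h1, h2⟩
    · rcases le_total (H.dist c x + K.dist s a) (H.dist c y + K.dist t a) with hle | hle
      · by_cases has : a = s
        · subst has
          refine ⟨.inl x, by simp, ?_⟩
          simp at hle ⊢
          omega
        · obtain ⟨w', h1, h2⟩ := exists_closer hK s a has
          refine ⟨.inr w', h1, ?_⟩
          have := dist_lip hK t _ _ h1.symm
          have := dist_lip hK t _ _ h1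
          simp only [Sum.elim_inr]
          omega
      · by_cases has : a = t
        · subst has
          refine ⟨.inl y, by simp, ?_⟩
          simp at hle ⊢
          omega
        · obtain ⟨w', h1, h2⟩ := exists_closer hK t a has
          refine ⟨.inr w', h1, ?_⟩
          have := dist_lip hK s _ _ h1.symm
          have := dist_lip hK s _ _ h1
          simp only [Sum.elim_inr]
          omega

end glue

theorem iso_dist_le {V W : Type*} {G : SimpleGraph V} {G' : SimpleGraph W} (φ : G →g G') (a b : V)
    (h : G.Reachable a b) : G'.dist (φ a) (φ b) ≤ G.dist a b := by
  obtain ⟨p, hp⟩ := h.exists_walk_length_eq_dist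
  rw [← hp, ← Walk.length_map φ p]
  exact dist_le _

theorem iso_dist {V W : Type*} {G : SimpleGraph V} {G' : SimpleGraph W} (φ : G ≃g G') (a b : V) :
    G'.dist (φ a) (φ b) = G.dist a b := by
  by_cases h : G.Reachable a b
  · refine le_antisymm (iso_dist_le φ.toHom a b h) ?_
    have := iso_dist_le φ.symm.toHom (φ a) (φ b) (h.map φ.toHom)
    simpa using this
  · rw [dist_eq_zero_of_not_reachable h, dist_eq_zero_of_not_reachable]
    intro h'
    apply h
    simpa using h'.map φ.symm.toHom

section glue
variable {C T : Type*} {H : SimpleGraph C} {K : SimpleGraph T} {x y : C} {s t : T}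

theorem glue_dist_rr (hH : H.Connected) (hK : K.Connected) (hxy : H.dist x y ≤ 2)
    (hst : K.dist s t ≤ 2) (a b : T) :
    (glue H K x y s t).dist (.inr a) (.inr b) = K.dist a b := by
  rw [← iso_dist glueSwap]
  exact (glue_dist_l hK hH hst hxy a (.inl b)).2

theorem glue_connected (hH : H.Connected) (hK : K.Connected) (hxy : H.dist x y ≤ 2)
    (hst : K.dist s t ≤ 2) : (glue H K x y s t).Connected := by
  rw [connected_iff_exists_forall_reachable]
  exact ⟨.inl x, fun w => (glue_dist_l hH hK hxy hst x w).1⟩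

end glue
/-! ### Wiener index bookkeeping -/

/-- Sum of the distances over ordered pairs. -/
noncomputable def wsum {V : Type*} [Fintype V] (G : SimpleGraph V) : ℕ :=
  ∑ u : V, ∑ v : V, G.dist u v

theorem wsum_even {V : Type*} [Fintype V] (G : SimpleGraph V) : Even (wsum G) := by
  classical
  unfold wsum
  rw [← Finset.sum_product']
  rw [← ZMod.natCast_eq_zero_iff_even]
  push_cast
  refine Finset.sum_involution (fun p _ => (p.2, p.1)) ?_ ?_ ?_ ?_
  · rintro ⟨a, b⟩ _
    simp only [G.dist_comm (u := b)]
    exact CharTwo.add_self_eq_zero _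
  · rintro ⟨a, b⟩ _ h h'
    simp only [Prod.mk.injEq] at h'
    apply h
    simp [h'.1]
  · simp
  · simp

theorem wsum_iso {V W : Type*} [Fintype V] [Fintype W] {G : SimpleGraph V} {G' : SimpleGraph W}
    (φ : G ≃g G') : wsum G = wsum G' := by
  unfold wsum
  refine Fintype.sum_equiv φ.toEquiv _ _ (fun a => ?_)
  refine Fintype.sum_equiv φ.toEquiv _ _ (fun b => ?_)
  exact (iso_dist φ a b).symm

/-- Deletion commutes with isomorphisms. -/
def deleteIso {V W : Type*} {G : SimpleGraph V} {G' : SimpleGraph W} (φ : G ≃g G') (v : V) :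
    deleteVertex G v ≃g deleteVertex G' (φ v) where
  toEquiv := φ.toEquiv.subtypeEquiv (fun a => by
    show a ≠ v ↔ φ a ≠ φ v
    simp)
  map_rel_iff' := by
    intro a b
    exact φ.map_rel_iff'

theorem IsSoltes.iso {V W : Type*} [Fintype V] [Fintype W] {G : SimpleGraph V}
    {G' : SimpleGraph W} (φ : G ≃g G') {v : V} (h : IsSoltes G v) : IsSoltes G' (φ v) := by
  refine ⟨(deleteIso φ v).connected_iff.1 h.1, ?_⟩
  have h2 := h.2
  have e1 := wsum_iso (deleteIso φ v)
  have e2 := wsum_iso φ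
  unfold wiener at *
  unfold wsum at *
  rw [← e1, ← e2]
  exact h2

theorem sum_ne {V : Type*} [Fintype V] (v : V) (f : V → ℕ) :
    ∑ u, f u = f v + ∑ u : {u : V // u ≠ v}, f u := by
  classical
  rw [← Finset.add_sum_erase _ _ (Finset.mem_univ v)]
  congr 1
  exact Finset.sum_subtype _ (by simp) _

theorem delete_dist_le {V : Type*} {G : SimpleGraph V} {v : V} (h : (deleteVertex G v).Connected)
    (a b : {u : V // u ≠ v}) : G.dist a b ≤ (deleteVertex G v).dist a b :=
  iso_dist_le (G := deleteVertex G v) (G' := G) ⟨Subtype.val, fun h => h⟩ a b (h.preconnected a b)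

theorem dist_lt_card' {V : Type*} [Fintype V] {G : SimpleGraph V} (h : G.Connected) (a b : V) :
    G.dist a b < Fintype.card V := by
  classical
  obtain ⟨p, hp, hl⟩ := h.exists_path_of_dist a b
  rw [← hl]
  exact hp.length_lt

theorem wsum_delete {V : Type*} [Fintype V] {G : SimpleGraph V} (hG : G.Connected) {v : V}
    (h : (deleteVertex G v).Connected) :
    wsum G ≤ wsum (deleteVertex G v) + 2 * (Fintype.card V) ^ 2 := by
  have h1 : wsum G = ∑ u, G.dist v u + ∑ u : {u : V // u ≠ v}, ∑ w, G.dist u w := sum_ne v _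
  have h2 : ∀ u : {u : V // u ≠ v}, ∑ w, G.dist u w =
      G.dist u v + ∑ w : {u : V // u ≠ v}, G.dist u w := fun u => sum_ne v _
  simp only [h2, Finset.sum_add_distrib] at h1
  have h3 : ∑ u, G.dist u v = G.dist v v + ∑ u : {u : V // u ≠ v}, G.dist u v := sum_ne v _
  have h4 : ∑ u : {u : V // u ≠ v}, ∑ w : {u : V // u ≠ v}, G.dist u w ≤
      wsum (deleteVertex G v) :=
    Finset.sum_le_sum fun u _ => Finset.sum_le_sum fun w _ => delete_dist_le h u w
  have h5 : ∀ f : V → ℕ, (∀ u, f u < Fintype.card V) → ∑ u, f u ≤ (Fintype.card V) ^ 2 := by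
    intro f hf
    calc ∑ u, f u ≤ ∑ u : V, Fintype.card V := Finset.sum_le_sum fun u _ => (hf u).le
      _ = _ := by simp [sq]
  have h6 := h5 (fun u => G.dist v u) (fun u => dist_lt_card' hG _ _)
  have h7 := h5 (fun u => G.dist u v) (fun u => dist_lt_card' hG _ _)
  omega

section glue
variable {C T : Type*} {H : SimpleGraph C} {K : SimpleGraph T} {x y : C} {s t : T}

/-- Deleting a vertex of the left part of a glued graph. -/
def glueDelete {v : C} (hx : x ≠ v) (hy : y ≠ v) :
    deleteVertex (glue H K x y s t) (.inl v) ≃g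
      glue (deleteVertex H v) K ⟨x, hx⟩ ⟨y, hy⟩ s t where
  toFun u := match u with
    | ⟨.inl c, h⟩ => .inl ⟨c, fun h' => h (by rw [h'])⟩
    | ⟨.inr τ, _⟩ => .inr τ
  invFun u := match u with
    | .inl c => ⟨.inl c.1, fun h => c.2 (Sum.inl.inj h)⟩
    | .inr τ => ⟨.inr τ, by simp⟩
  left_inv := by rintro ⟨a | a, h⟩ <;> rfl
  right_inv := by rintro (a | a) <;> rfl
  map_rel_iff' := by
    rintro ⟨a | a, ha⟩ ⟨b | b, hb⟩ <;> simp [deleteVertex]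

theorem twin_dist (hH : H.Connected) (htw : ∀ z, H.Adj x z ↔ H.Adj y z) (c : C) (hx : c ≠ x)
    (hy : c ≠ y) : H.dist c x = H.dist c y := by
  obtain ⟨z, h1, h2⟩ := exists_closer hH c x hx.symm
  obtain ⟨z', h1', h2'⟩ := exists_closer hH c y hy.symm
  have := dist_lip hH c z y ((htw z).1 h1).symm
  have := dist_lip hH c z' x ((htw z').2 h1').symm
  omega

theorem twin_dist_two (hH : H.Connected) (hxy : x ≠ y) (hna : ¬ H.Adj x y)
    (p : C) (h1 : H.Adj x p) (h2 : H.Adj y p) : H.dist x y = 2 := by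
  have h3 : H.dist x y ≤ 2 := by simpa using dist_le (Walk.cons h1 (Walk.cons h2.symm Walk.nil))
  have h4 : H.dist x y ≠ 0 := by rwa [ne_eq, hH.dist_eq_zero_iff]
  have h5 : H.dist x y ≠ 1 := by rwa [ne_eq, dist_eq_one_iff_adj]
  omega

theorem glue_wsum [Fintype C] [Fintype T] (hH : H.Connected) (hK : K.Connected)
    (hxy : H.dist x y ≤ 2) (hst : K.dist s t ≤ 2) :
    wsum (glue H K x y s t) = wsum H + wsum K + 2 * ∑ c, ∑ τ,
      (1 + min (H.dist c x + K.dist s τ) (H.dist c y + K.dist t τ)) := by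
  have h1 : ∀ c τ, (glue H K x y s t).dist (.inl c) (.inr τ) =
      1 + min (H.dist c x + K.dist s τ) (H.dist c y + K.dist t τ) := fun c τ =>
    (glue_dist_l hH hK hxy hst c (.inr τ)).2
  have h2 : ∀ c τ, (glue H K x y s t).dist (.inr τ) (.inl c) =
      1 + min (H.dist c x + K.dist s τ) (H.dist c y + K.dist t τ) := fun c τ => by
    rw [dist_comm, h1]
  have h3 : ∀ c c', (glue H K x y s t).dist (.inl c) (.inl c') = H.dist c c' := fun c c' =>
    (glue_dist_l hH hK hxy hst c (.inl c')).2
  have h4 := glue_dist_rr hH hK hxy hst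
  unfold wsum
  simp only [Fintype.sum_sum_type, h1, h2, h3, h4, Finset.sum_add_distrib (f := fun _ => ∑ _, _)]
  rw [Finset.sum_comm (s := (Finset.univ : Finset T)) (t := (Finset.univ : Finset C))]
  ring

theorem soltes_glue [Fintype C] [Fintype T] {v : C} (hH : H.Connected)
    (hHv : (deleteVertex H v).Connected) (hK : K.Connected) (hst : K.Adj s t)
    (hx : x ≠ v) (hy : y ≠ v) (hxy : x ≠ y) (hna : ¬ H.Adj x y)
    (htw : ∀ z, H.Adj x z ↔ H.Adj y z) (p : C) (hp : H.Adj x p) (hpv : p ≠ v)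
    (lev : T → ℕ) (hlev : ∀ τ, min (K.dist s τ) (K.dist t τ) = lev τ)
    (heq : wsum (deleteVertex H v) + 2 * (Fintype.card T * ∑ c : {c : C // c ≠ v},
        ((deleteVertex H v).dist c ⟨x, hx⟩ - H.dist c x)) =
      wsum H + 2 * (Fintype.card T * (H.dist v x + 1) + ∑ τ, lev τ)) :
    IsSoltes (glue H K x y s t) (.inl v) := by
  have d1 : H.dist x y = 2 := twin_dist_two hH hxy hna p hp ((htw p).1 hp)
  have d2 : (deleteVertex H v).dist ⟨x, hx⟩ ⟨y, hy⟩ = 2 :=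
    twin_dist_two hHv (by simpa using hxy) hna ⟨p, hpv⟩ hp ((htw p).1 hp)
  have d3 : K.dist s t ≤ 2 := by rw [dist_eq_one_iff_adj.2 hst]; omega
  refine ⟨(glueDelete hx hy).connected_iff.2 (glue_connected hHv hK d2.le d3), ?_⟩
  suffices h : wsum (deleteVertex (glue H K x y s t) (.inl v)) = wsum (glue H K x y s t) by
    unfold wiener; unfold wsum at h; rw [h]
  rw [wsum_iso (glueDelete hx hy), glue_wsum hHv hK d2.le d3, glue_wsum hH hK d1.le d3,
    sum_ne v]
  have e1 : ∑ τ, (1 + min (H.dist v x + K.dist s τ) (H.dist v y + K.dist t τ)) =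
      Fintype.card T * (H.dist v x + 1) + ∑ τ, lev τ := by
    rw [← twin_dist hH htw v hx.symm hy.symm]
    simp only [min_add_add_left, hlev, Finset.sum_add_distrib]
    simp
    ring
  have htw' : ∀ z, (deleteVertex H v).Adj ⟨x, hx⟩ z ↔ (deleteVertex H v).Adj ⟨y, hy⟩ z :=
    fun z => htw z.1
  have e2 : ∀ c : {c : C // c ≠ v}, ∑ τ, (1 + min ((deleteVertex H v).dist c ⟨x, hx⟩ + K.dist s τ)
      ((deleteVertex H v).dist c ⟨y, hy⟩ + K.dist t τ)) =
      Fintype.card T * ((deleteVertex H v).dist c ⟨x, hx⟩ - H.dist c x) +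
      ∑ τ, (1 + min (H.dist c x + K.dist s τ) (H.dist c y + K.dist t τ)) := by
    intro c
    have l1 : H.dist c x ≤ (deleteVertex H v).dist c ⟨x, hx⟩ := delete_dist_le hHv c ⟨x, hx⟩
    have l2 : (deleteVertex H v).dist c ⟨y, hy⟩ =
        ((deleteVertex H v).dist c ⟨x, hx⟩ - H.dist c x) + H.dist c y := by
      by_cases cx : c = ⟨x, hx⟩
      · subst cx
        simp [d1, d2]
      by_cases cy : c = ⟨y, hy⟩
      · subst cy
        rw [dist_comm, H.dist_comm] at l1
        rw [dist_comm, H.dist_comm]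
        simp [d1, d2, (deleteVertex H v).dist_comm (u := ⟨y, hy⟩)]
      have := twin_dist hH htw c (fun h => cx (Subtype.ext h)) (fun h => cy (Subtype.ext h))
      have := twin_dist hHv (x := ⟨x, hx⟩) (y := ⟨y, hy⟩) htw' c cx cy
      omega
    rw [← smul_eq_mul, Fintype.card, ← Finset.sum_const, ← Finset.sum_add_distrib]
    refine Finset.sum_congr rfl fun τ _ => ?_
    omega
  simp only [e1, e2, Finset.sum_add_distrib (f := fun _ => Fintype.card T * _), ← Finset.mul_sum]
  omega

end glue

/-! ### st-numberings -/

/-- `f` behaves like an st-numbering with source `s` and sink `t`. -/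
def StNum {V : Type*} (G : SimpleGraph V) (s t : V) (f : V → ℕ) : Prop :=
  (∀ u, u ≠ s → ∃ w, G.Adj u w ∧ f w < f u) ∧ (∀ u, u ≠ t → ∃ w, G.Adj u w ∧ f u < f w)

theorem StNum.down {V : Type*} {G : SimpleGraph V} {s t : V} {f : V → ℕ} (h : StNum G s t f)
    {v : V} (hs : s ≠ v) (u : {u : V // u ≠ v}) (hu : f u ≤ f v) :
    (deleteVertex G v).Reachable u ⟨s, hs⟩ := by
  induction hn : f u using Nat.strong_induction_on generalizing u with
  | _ n ih =>
    by_cases hus : u.1 = s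
    · have : u = ⟨s, hs⟩ := Subtype.ext hus
      rw [this]
    · obtain ⟨w, hw, hlt⟩ := h.1 u hus
      have hwv : w ≠ v := by rintro rfl; omega
      have h1 : (deleteVertex G v).Adj u ⟨w, hwv⟩ := hw
      exact h1.reachable.trans (ih (f w) (by omega) ⟨w, hwv⟩ (by simp only; omega) rfl)

theorem StNum.up {V : Type*} [Finite V] {G : SimpleGraph V} {s t : V} {f : V → ℕ}
    (h : StNum G s t f) {v : V} (ht : t ≠ v) (u : {u : V // u ≠ v}) (hu : f v ≤ f u) :
    (deleteVertex G v).Reachable u ⟨t, ht⟩ := by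
  obtain ⟨B, hB⟩ : ∃ B, ∀ u, f u ≤ B := by
    obtain ⟨B, hB⟩ := (Set.finite_range f).bddAbove
    exact ⟨B, fun u => hB ⟨u, rfl⟩⟩
  induction hn : B - f u using Nat.strong_induction_on generalizing u with
  | _ n ih =>
    by_cases hus : u.1 = t
    · have : u = ⟨t, ht⟩ := Subtype.ext hus
      rw [this]
    · obtain ⟨w, hw, hlt⟩ := h.2 u hus
      have hwv : w ≠ v := by rintro rfl; omega
      have h1 : (deleteVertex G v).Adj u ⟨w, hwv⟩ := hw
      have := hB w
      have := hB u
      exact h1.reachable.trans (ih (B - f w) (by omega) ⟨w, hwv⟩ (by simp only; omega) rfl)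

theorem StNum.delete_connected {V : Type*} [Finite V] {G : SimpleGraph V} {s t : V} {f : V → ℕ}
    (h : StNum G s t f) (hst : s ≠ t) (v : V)
    (hr : ∀ (hs : s ≠ v) (ht : t ≠ v), (deleteVertex G v).Reachable ⟨s, hs⟩ ⟨t, ht⟩) :
    (deleteVertex G v).Connected := by
  rw [connected_iff_exists_forall_reachable]
  by_cases hs : s = v
  · subst hs
    refine ⟨⟨t, hst.symm⟩, fun u => (h.up hst.symm u ?_).symm⟩
    by_contra hlt
    -- the source is the minimum
    have key : ∀ n, ∀ u, f u = n → f s ≤ f u := by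
      intro n
      induction n using Nat.strong_induction_on with
      | _ n ih =>
        intro u hu
        by_cases hus : u = s
        · rw [hus]
        · obtain ⟨w, hw, hlt⟩ := h.1 u hus
          have := ih (f w) (by omega) w rfl
          omega
    exact hlt (key _ u.1 rfl)
  by_cases ht : t = v
  · subst ht
    refine ⟨⟨s, hs⟩, fun u => (h.down hs u ?_).symm⟩
    have : Nonempty V := ⟨s⟩
    obtain ⟨m, hm⟩ := Finite.exists_max f
    by_cases hmt : m = t
    · exact hmt ▸ hm u.1
    · obtain ⟨w, hw, hlt⟩ := h.2 m hmt
      have := hm w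
      omega
  · refine ⟨⟨s, hs⟩, fun u => ?_⟩
    rcases le_total (f u) (f v) with hle | hle
    · exact (h.down hs u hle).symm
    · exact (hr hs ht).trans (h.up ht u hle).symm

theorem glue_stNum {C T : Type*} [Finite C] {H : SimpleGraph C} {K : SimpleGraph T} {x y : C}
    {s t : T} {f : C → ℕ} {g : T → ℕ} (hf : StNum H x y f) (hg : StNum K s t g) (hgs : g s = 0)
    (hgt : 0 < g t) : ∃ h, StNum (glue H K x y s t) (.inr s) (.inr t) h := by
  obtain ⟨B, hB⟩ : ∃ B, ∀ u, f u ≤ B := by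
    obtain ⟨B, hB⟩ := (Set.finite_range f).bddAbove
    exact ⟨B, fun u => hB ⟨u, rfl⟩⟩
  refine ⟨Sum.elim (fun c => f c + 1) (fun τ => (B + 2) * g τ), ?_, ?_⟩
  · rintro (u | u) hu
    · by_cases hux : u = x
      · exact ⟨.inr s, by simp [hux], by simp [hgs]⟩
      · obtain ⟨w, hw, hlt⟩ := hf.1 u hux
        exact ⟨.inl w, hw, by simpa using hlt⟩
    · obtain ⟨w, hw, hlt⟩ := hg.1 u (by simpa using hu)
      exact ⟨.inr w, hw, by simpa using hlt⟩
  · rintro (u | u) hu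
    · by_cases hux : u = y
      · refine ⟨.inr t, by simp [hux], ?_⟩
        simp only [Sum.elim_inl, Sum.elim_inr]
        have := hB u
        nlinarith
      · obtain ⟨w, hw, hlt⟩ := hf.2 u hux
        exact ⟨.inl w, hw, by simpa using hlt⟩
    · obtain ⟨w, hw, hlt⟩ := hg.2 u (by simpa using hu)
      exact ⟨.inr w, hw, by simpa using hlt⟩

/-- Automorphisms of the left part extend to the glued graph. -/
def glueAut {C T : Type*} {H : SimpleGraph C} (K : SimpleGraph T) {x y : C} (s t : T)
    (φ : H ≃g H) (hx : φ x = x) (hy : φ y = y) : glue H K x y s t ≃g glue H K x y s t where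
  toEquiv := Equiv.sumCongr φ.toEquiv (Equiv.refl T)
  map_rel_iff' := by
    have hx' : ∀ a, φ a = x ↔ a = x := fun a => by
      constructor
      · intro h; exact φ.injective (h.trans hx.symm)
      · rintro rfl; exact hx
    have hy' : ∀ a, φ a = y ↔ a = y := fun a => by
      constructor
      · intro h; exact φ.injective (h.trans hy.symm)
      · rintro rfl; exact hy
    rintro (a | a) (b | b)
    · exact φ.map_rel_iff'
    · show (φ a = x ∧ _ ∨ φ a = y ∧ _) ↔ _
      rw [hx', hy']; rfl
    · show (φ b = x ∧ _ ∨ φ b = y ∧ _) ↔ _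
      rw [hx', hy']; rfl
    · rfl

/-! ### Degrees -/

/-- The vertex `v` has exactly the three neighbours described. -/
def Deg3 {V : Type*} (G : SimpleGraph V) (v : V) : Prop :=
  ∃ a b c, a ≠ b ∧ a ≠ c ∧ b ≠ c ∧ ∀ w, G.Adj v w ↔ w = a ∨ w = b ∨ w = c

/-- The vertex `v` has exactly the two neighbours described. -/
def Deg2 {V : Type*} (G : SimpleGraph V) (v : V) : Prop :=
  ∃ a b, a ≠ b ∧ ∀ w, G.Adj v w ↔ w = a ∨ w = b

theorem Deg3.ncard {V : Type*} {G : SimpleGraph V} {v : V} (h : Deg3 G v) :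
    (G.neighborSet v).ncard = 3 := by
  obtain ⟨a, b, c, h1, h2, h3, h4⟩ := h
  rw [Set.ncard_eq_three]
  exact ⟨a, b, c, h1, h2, h3, by ext w; simp [h4]⟩

theorem glue_cubic {C T : Type*} {H : SimpleGraph C} {K : SimpleGraph T} {x y : C} {s t : T}
    (hxy : x ≠ y) (hst : s ≠ t) (hx : Deg2 H x) (hy : Deg2 H y) (hs : Deg2 K s) (ht : Deg2 K t)
    (hC : ∀ c, c ≠ x → c ≠ y → Deg3 H c) (hT : ∀ τ, τ ≠ s → τ ≠ t → Deg3 K τ) :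
    IsCubic (glue H K x y s t) := by
  intro u
  apply Deg3.ncard
  rcases u with u | u
  · by_cases h1 : u = x
    · subst h1
      obtain ⟨a, b, hab, h⟩ := hx
      refine ⟨.inl a, .inl b, .inr s, by simpa using hab, by simp, by simp, ?_⟩
      rintro (w | w) <;> simp [h, hxy]
    by_cases h2 : u = y
    · subst h2
      obtain ⟨a, b, hab, h⟩ := hy
      refine ⟨.inl a, .inl b, .inr t, by simpa using hab, by simp, by simp, ?_⟩
      rintro (w | w) <;> simp [h, hxy.symm]
    obtain ⟨a, b, c, h3, h4, h5, h⟩ := hC u h1 h2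
    refine ⟨.inl a, .inl b, .inl c, by simpa using h3, by simpa using h4, by simpa using h5, ?_⟩
    rintro (w | w) <;> simp [h, h1, h2]
  · by_cases h1 : u = s
    · subst h1
      obtain ⟨a, b, hab, h⟩ := hs
      refine ⟨.inr a, .inr b, .inl x, by simpa using hab, by simp, by simp, ?_⟩
      rintro (w | w) <;> simp [h, hst]
    by_cases h2 : u = t
    · subst h2
      obtain ⟨a, b, hab, h⟩ := ht
      refine ⟨.inr a, .inr b, .inl y, by simpa using hab, by simp, by simp, ?_⟩
      rintro (w | w) <;> simp [h, hst.symm]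
    obtain ⟨a, b, c, h3, h4, h5, h⟩ := hT u h1 h2
    refine ⟨.inr a, .inr b, .inr c, by simpa using h3, by simpa using h4, by simpa using h5, ?_⟩
    rintro (w | w) <;> simp [h, h1, h2]
/-! ### The tail -/

/-- Vertices of the tail: a ladder with `L + 1` levels and two extra vertices. -/
inductive TV (L : ℕ) : Type
  | rail (k : Fin (L + 1)) (e : Bool)
  | ex (e : Bool)

/-- The tail vertices as a sum type. -/
def TV.equiv (L : ℕ) : (Fin (L + 1) × Bool) ⊕ Bool ≃ TV L where
  toFun u := match u with
    | .inl (k, e) => .rail k e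
    | .inr e => .ex e
  invFun u := match u with
    | .rail k e => .inl (k, e)
    | .ex e => .inr e
  left_inv := by rintro (⟨k, e⟩ | e) <;> rfl
  right_inv := by rintro (⟨k, e⟩ | e) <;> rfl

instance (L : ℕ) : Fintype (TV L) := Fintype.ofEquiv _ (TV.equiv L)

/-- Adjacency of rails with extra vertices. -/
def exAdj (i : ℕ) (b : Bool) (k : ℕ) (e κ : Bool) : Prop :=
  if b then (κ = false ∧ k = i) ∨ (κ = true ∧ k = i + 1) else (k = i ∨ k = i + 1) ∧ e = κ

/-- The tail graph. -/
def tail (L i : ℕ) (b : Bool) : SimpleGraph (TV L) where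
  Adj u w := match u, w with
    | .rail k e, .rail k' e' =>
      ((k.1 + 1 = k'.1 ∨ k'.1 + 1 = k.1) ∧ (e = e' ∨ k.1 = L ∨ k'.1 = L)) ∨
      (k.1 = k'.1 ∧ e ≠ e' ∧ k.1 + 1 ≠ L ∧ k.1 ≠ i ∧ k.1 ≠ i + 1)
    | .rail k e, .ex κ => exAdj i b k.1 e κ
    | .ex κ, .rail k e => exAdj i b k.1 e κ
    | .ex κ, .ex κ' => κ ≠ κ'
  symm := ⟨by
    rintro (⟨k, e⟩ | κ) (⟨k', e'⟩ | κ') h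
    · dsimp only at h ⊢
      rcases h with ⟨h1, h2⟩ | ⟨h1, h2, h3, h4, h5⟩
      · exact Or.inl ⟨h1.symm, by tauto⟩
      · exact Or.inr ⟨h1.symm, h2.symm, by omega, by omega, by omega⟩
    · exact h
    · exact h
    · exact Ne.symm h⟩
  loopless := ⟨by
    rintro (⟨k, e⟩ | κ) h
    · dsimp only at h
      rcases h with ⟨h1, h2⟩ | ⟨h1, h2, h3, h4, h5⟩
      · omega
      · exact h2 rfl
    · exact h rfl⟩

/-- Level of a tail vertex. -/
def tlev (L i : ℕ) (b : Bool) : TV L → ℕ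
  | .rail k _ => k.1
  | .ex κ => i + 1 + (if b && κ then 1 else 0)

/-- Numbering of the tail. -/
def tnum (L i : ℕ) (b : Bool) : TV L → ℕ
  | .rail k false => 2 * k.1
  | .rail k true => 4 * L + 10 - 2 * k.1
  | .ex κ => if b then 2 * L + 5 else if κ then 4 * L + 9 - 2 * i else 2 * i + 1

section tail
variable {L i : ℕ} {b : Bool}

theorem tail_rr (k k' : Fin (L + 1)) (e e' : Bool) : (tail L i b).Adj (.rail k e) (.rail k' e') ↔
      ((k.1 + 1 = k'.1 ∨ k'.1 + 1 = k.1) ∧ (e = e' ∨ k.1 = L ∨ k'.1 = L)) ∨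
      (k.1 = k'.1 ∧ e ≠ e' ∧ k.1 + 1 ≠ L ∧ k.1 ≠ i ∧ k.1 ≠ i + 1) := Iff.rfl
theorem tail_re (k : Fin (L + 1)) (e κ : Bool) : (tail L i b).Adj (.rail k e) (.ex κ) ↔
      exAdj i b k.1 e κ := Iff.rfl
theorem tail_er (k : Fin (L + 1)) (e κ : Bool) : (tail L i b).Adj (.ex κ) (.rail k e) ↔
      exAdj i b k.1 e κ := Iff.rfl
theorem tail_ee (κ κ' : Bool) : (tail L i b).Adj (.ex κ) (.ex κ') ↔ κ ≠ κ' := Iff.rfl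

theorem tlev_lip (u w : TV L) (h : (tail L i b).Adj u w) :
    tlev L i b w ≤ tlev L i b u + 1 := by
  rcases u with ⟨k, e⟩ | κ <;> rcases w with ⟨k', e'⟩ | κ'
  · rw [tail_rr] at h
    simp only [tlev]; omega
  · rw [tail_re] at h
    cases b <;> cases κ' <;> simp [tlev, exAdj] at h ⊢ <;> omega
  · rw [tail_er] at h
    cases b <;> cases κ <;> simp [tlev, exAdj] at h ⊢ <;> omega
  · cases b <;> cases κ <;> cases κ' <;> simp [tlev]

theorem tlev_desc (hL : i + 3 ≤ L) (u : TV L) (h : tlev L i b u ≠ 0) :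
    ∃ w, (tail L i b).Adj u w ∧ tlev L i b w + 1 = tlev L i b u := by
  rcases u with ⟨k, e⟩ | κ
  · simp only [tlev] at h
    refine ⟨.rail ⟨k.1 - 1, by omega⟩ e, ?_, ?_⟩
    · rw [tail_rr]; left; simp; omega
    · simp only [tlev]; omega
  · cases b
    · exact ⟨.rail ⟨i, by omega⟩ κ, by simp [tail_er, exAdj], by simp [tlev]⟩
    · cases κ
      · exact ⟨.rail ⟨i, by omega⟩ false, by simp [tail_er, exAdj], by simp [tlev]⟩
      · exact ⟨.rail ⟨i + 1, by omega⟩ false, by simp [tail_er, exAdj], by simp [tlev]⟩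

theorem tail_st (hi : 1 ≤ i) (hL : i + 3 ≤ L) :
    (tail L i b).Adj (.rail 0 false) (.rail 0 true) := by
  rw [tail_rr]; right; simp; omega

theorem tlev_zero (u : TV L) (h : tlev L i b u = 0) : u = .rail 0 false ∨ u = .rail 0 true := by
  rcases u with ⟨k, e⟩ | κ
  · simp only [tlev] at h
    have : k = 0 := Fin.ext h
    subst this
    cases e <;> simp
  · simp [tlev] at h

theorem tail_connected (hi : 1 ≤ i) (hL : i + 3 ≤ L) : (tail L i b).Connected := by
  rw [connected_iff_exists_forall_reachable]
  refine ⟨.rail 0 false, fun w => ?_⟩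
  obtain ⟨z, hz, hr, -⟩ := exists_zero_of_descent (tlev L i b) (tlev_desc hL) w
  rcases tlev_zero z hz with rfl | rfl
  · exact hr
  · exact (tail_st hi hL).reachable.trans hr

theorem tail_dist (hi : 1 ≤ i) (hL : i + 3 ≤ L) (w : TV L) :
    min ((tail L i b).dist (.rail 0 false) w) ((tail L i b).dist (.rail 0 true) w) =
      tlev L i b w := by
  have hc := tail_connected (b := b) hi hL
  have h1 := dist_ge_of_lipschitz (tlev L i b) tlev_lip (hc.preconnected (.rail 0 false) w)
  have h2 := dist_ge_of_lipschitz (tlev L i b) tlev_lip (hc.preconnected (.rail 0 true) w)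
  have h3 : tlev L i b (.rail 0 false) = 0 := rfl
  have h4 : tlev L i b (.rail 0 true) = 0 := rfl
  obtain ⟨z, hz, hr, hle⟩ := exists_zero_of_descent (tlev L i b) (tlev_desc hL) w
  rcases tlev_zero z hz with rfl | rfl <;> omega

theorem tail_stNum (hi : 1 ≤ i) (hL : i + 3 ≤ L) :
    StNum (tail L i b) (.rail 0 false) (.rail 0 true) (tnum L i b) := by
  constructor
  · rintro (⟨k, e⟩ | κ) h
    · cases e
      · have hk : k.1 ≠ 0 := fun h' => h (by rw [show k = 0 from Fin.ext h'])
        refine ⟨.rail ⟨k.1 - 1, by omega⟩ false, ?_, ?_⟩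
        · rw [tail_rr]; left; simp; omega
        · simp only [tnum]; omega
      · by_cases hk : k.1 = L
        · refine ⟨.rail k false, ?_, ?_⟩
          · rw [tail_rr]; right; simp; omega
          · simp only [tnum]; omega
        · refine ⟨.rail ⟨k.1 + 1, by omega⟩ true, ?_, ?_⟩
          · rw [tail_rr]; left; simp
          · simp only [tnum]; omega
    · cases b
      · cases κ
        · exact ⟨.rail ⟨i, by omega⟩ false, by simp [tail_er, exAdj], by simp [tnum]⟩
        · refine ⟨.rail ⟨i + 1, by omega⟩ true, by simp [tail_er, exAdj], ?_⟩
          simp [tnum]; omega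
      · cases κ
        · refine ⟨.rail ⟨i, by omega⟩ false, by simp [tail_er, exAdj], ?_⟩
          simp [tnum]; omega
        · refine ⟨.rail ⟨i + 1, by omega⟩ false, by simp [tail_er, exAdj], ?_⟩
          simp [tnum]; omega
  · rintro (⟨k, e⟩ | κ) h
    · cases e
      · by_cases hk : k.1 = L
        · refine ⟨.rail k true, ?_, ?_⟩
          · rw [tail_rr]; right; simp; omega
          · simp only [tnum]; omega
        · refine ⟨.rail ⟨k.1 + 1, by omega⟩ false, ?_, ?_⟩
          · rw [tail_rr]; left; simp
          · simp only [tnum]; omega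
      · have hk : k.1 ≠ 0 := fun h' => h (by rw [show k = 0 from Fin.ext h'])
        refine ⟨.rail ⟨k.1 - 1, by omega⟩ true, ?_, ?_⟩
        · rw [tail_rr]; left; simp; omega
        · simp only [tnum]; omega
    · cases b
      · cases κ
        · refine ⟨.rail ⟨i + 1, by omega⟩ false, by simp [tail_er, exAdj], ?_⟩
          simp [tnum]; omega
        · refine ⟨.rail ⟨i, by omega⟩ true, by simp [tail_er, exAdj], ?_⟩
          simp [tnum]; omega
      · cases κ
        · refine ⟨.rail ⟨i, by omega⟩ true, by simp [tail_er, exAdj], ?_⟩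
          simp [tnum]; omega
        · refine ⟨.rail ⟨i + 1, by omega⟩ true, by simp [tail_er, exAdj], ?_⟩
          simp [tnum]; omega

theorem tail_deg2 (hi : 1 ≤ i) (hL : i + 3 ≤ L) (e : Bool) : Deg2 (tail L i b) (.rail 0 e) := by
  refine ⟨.rail ⟨1, by omega⟩ e, .rail 0 (!e), by simp [Fin.ext_iff], ?_⟩
  rintro (⟨k, e'⟩ | κ)
  · have h0 : ((0 : Fin (L + 1)) : ℕ) = 0 := rfl
    rw [tail_rr]
    simp only [TV.rail.injEq, Fin.ext_iff, h0]
    cases e <;> cases e' <;> simp <;> omega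
  · have h0 : ((0 : Fin (L + 1)) : ℕ) = 0 := rfl
    rw [tail_re, h0]
    cases b <;> cases κ <;> simp [exAdj] <;> omega

theorem tail_deg3 (hi : 1 ≤ i) (hL : i + 3 ≤ L) (u : TV L) (h1 : u ≠ .rail 0 false)
    (h2 : u ≠ .rail 0 true) : Deg3 (tail L i b) u := by
  rcases u with ⟨k, e⟩ | κ
  · have hk : k.1 ≠ 0 := by
      intro h'
      obtain rfl : k = 0 := Fin.ext h'
      cases e
      · exact h1 rfl
      · exact h2 rfl
    have hkL := k.2
    by_cases c1 : k.1 = L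
    · refine ⟨.rail ⟨L - 1, by omega⟩ e, .rail ⟨L - 1, by omega⟩ (!e), .rail k (!e), by simp,
        by simp [Fin.ext_iff], by simp [Fin.ext_iff]; omega, ?_⟩
      rintro (⟨k', e'⟩ | κ)
      · rw [tail_rr]
        simp only [TV.rail.injEq, Fin.ext_iff]
        cases e <;> cases e' <;> simp <;> omega
      · rw [tail_re]
        cases b <;> cases κ <;> simp [exAdj] <;> omega
    by_cases c2 : k.1 + 1 = L
    · refine ⟨.rail ⟨L, by omega⟩ e, .rail ⟨L, by omega⟩ (!e), .rail ⟨k.1 - 1, by omega⟩ e, by simp,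
        by simp [Fin.ext_iff]; omega, by simp [Fin.ext_iff], ?_⟩
      rintro (⟨k', e'⟩ | κ)
      · rw [tail_rr]
        simp only [TV.rail.injEq, Fin.ext_iff]
        cases e <;> cases e' <;> simp <;> omega
      · rw [tail_re]
        cases b <;> cases κ <;> simp [exAdj] <;> omega
    by_cases c3 : k.1 = i ∨ k.1 = i + 1
    · refine ⟨.rail ⟨k.1 - 1, by omega⟩ e, .rail ⟨k.1 + 1, by omega⟩ e,
        .ex (if b then decide (k.1 = i + 1) else e), by simp [Fin.ext_iff],
        by simp, by simp, ?_⟩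
      rintro (⟨k', e'⟩ | κ)
      · rw [tail_rr]
        simp only [TV.rail.injEq, Fin.ext_iff]
        cases e <;> cases e' <;> simp <;> omega
      · rw [tail_re]
        rcases c3 with c3 | c3 <;> cases b <;> cases κ <;> simp [exAdj, c3, eq_comm]
    · refine ⟨.rail ⟨k.1 - 1, by omega⟩ e, .rail ⟨k.1 + 1, by omega⟩ e,
        .rail k (!e), by simp [Fin.ext_iff], by simp [Fin.ext_iff],
        by simp [Fin.ext_iff], ?_⟩
      rintro (⟨k', e'⟩ | κ)
      · rw [tail_rr]
        simp only [TV.rail.injEq, Fin.ext_iff]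
        cases e <;> cases e' <;> simp <;> omega
      · rw [tail_re]
        cases b <;> cases κ <;> simp [exAdj] <;> omega
  · cases b
    · refine ⟨.rail ⟨i, by omega⟩ κ, .rail ⟨i + 1, by omega⟩ κ, .ex (!κ), by simp [Fin.ext_iff],
        by simp, by simp, ?_⟩
      rintro (⟨k', e'⟩ | κ')
      · rw [tail_er]
        simp only [TV.rail.injEq, Fin.ext_iff]
        cases κ <;> cases e' <;> simp [exAdj]
      · rw [tail_ee]
        cases κ <;> cases κ' <;> simp
    · refine ⟨.rail ⟨i + (if κ then 1 else 0), by split <;> omega⟩ false,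
        .rail ⟨i + (if κ then 1 else 0), by split <;> omega⟩ true, .ex (!κ), by simp,
        by simp, by simp, ?_⟩
      rintro (⟨k', e'⟩ | κ')
      · rw [tail_er]
        simp only [TV.rail.injEq, Fin.ext_iff]
        cases κ <;> cases e' <;> simp [exAdj]
      · rw [tail_ee]
        cases κ <;> cases κ' <;> simp

end tail

theorem tail_card (L : ℕ) : Fintype.card (TV L) = 2 * L + 4 := by
  rw [← Fintype.card_congr (TV.equiv L)]
  simp
  ring

theorem tail_sum (L i : ℕ) (b : Bool) :
    ∑ u, tlev L i b u = L * (L + 1) + 2 * i + 2 + (if b then 1 else 0) := by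
  rw [← (TV.equiv L).sum_comp, Fintype.sum_sum_type, Fintype.sum_prod_type]
  have h : ∑ k : Fin (L + 1), k.1 = ∑ k ∈ Finset.range (L + 1), k :=
    Fin.sum_univ_eq_sum_range (fun k => k) (L + 1)
  have h2 := Finset.sum_range_id_mul_two (L + 1)
  simp only [TV.equiv, Equiv.coe_fn_mk, tlev, Fintype.sum_bool, Finset.sum_add_distrib, h]
  have h3 : (L + 1) * (L + 1 - 1) = L * (L + 1) := by rw [Nat.add_sub_cancel]; ring
  cases b <;> simp <;> omega

/-- Solving for the parameters of the tail. -/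
theorem tail_exists (β : ℕ) (hβ : 4 ≤ β) (E : ℤ) (hE : -(β : ℤ) ^ 2 ≤ E) :
    ∃ (L i : ℕ) (b : Bool), 1 ≤ i ∧ i + 3 ≤ L ∧
      E + β * (Fintype.card (TV L) : ℤ) = ∑ u, (tlev L i b u : ℤ) := by
  -- `g L + 2 ≤ E`
  let g : ℕ → ℤ := fun L => (L : ℤ) * (L + 1) - 2 * β * (L + 2) + 2
  have hb : g β + 2 ≤ E := by
    have : (4 : ℤ) ≤ β := by exact_mod_cast hβ
    simp only [g]; nlinarith
  have hex : ∃ n, ¬ (g (β + n) + 2 ≤ E) := by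
    refine ⟨2 * β + E.natAbs + 10, ?_⟩
    have h1 : (4 : ℤ) ≤ β := by exact_mod_cast hβ
    have h2 : E ≤ |E| := le_abs_self E
    have h3 : 0 ≤ |E| := abs_nonneg E
    simp only [g]
    push_cast
    nlinarith [mul_nonneg h3 (by linarith : (0:ℤ) ≤ β)]
  classical
  have hspec := Nat.find_spec hex
  have hmin := fun m => Nat.find_min hex (m := m)
  set n := Nat.find hex
  have hn : n ≠ 0 := by
    intro h0
    rw [h0] at hspec
    exact hspec hb
  obtain ⟨m, hm⟩ := Nat.exists_eq_succ_of_ne_zero hn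
  have hm1 := not_not.1 (hmin m (by omega))
  rw [hm] at hspec
  set L := β + m with hLdef
  have hLL : β + m.succ = L + 1 := by omega
  rw [hLL] at hspec
  obtain ⟨d, hd⟩ : ∃ d : ℕ, E = g L + 2 + d := ⟨(E - g L - 2).toNat, by omega⟩
  have hgap : g (L + 1) = g L + 2 * L + 2 - 2 * β := by
    simp only [g]; push_cast; ring
  refine ⟨L, d / 2 + 1, decide (d % 2 = 1), by omega, by omega, ?_⟩
  rw [← Nat.cast_sum, tail_sum, tail_card, hd]
  simp only [g, decide_eq_true_eq]
  have hd2 : ((2 * (d / 2 + 1) + 2 + (if d % 2 = 1 then 1 else 0) : ℕ) : ℤ) = d + 4 := by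
    split <;> omega
  have : ((L * (L + 1) + 2 * (d / 2 + 1) + 2 + (if d % 2 = 1 then 1 else 0) : ℕ) : ℤ) =
      L * (L + 1) + (d + 4) := by
    rw [← hd2]; push_cast; ring
  rw [this]
  push_cast
  ring
/-! ### Automorphisms of the binary tree in heap order -/

/-- Flip the bits of heap indices, level by level. -/
def sig (b : ℕ → ℕ) (m : ℕ) : ℕ :=
  if m < 2 then m else 2 * sig b (m / 2) + (m + b (Nat.log2 m)) % 2
termination_by m
decreasing_by omega

theorem sig_small (b : ℕ → ℕ) {m : ℕ} (h : m < 2) : sig b m = m := by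
  rw [sig, if_pos h]

theorem sig_big (b : ℕ → ℕ) {m : ℕ} (h : ¬ m < 2) :
    sig b m = 2 * sig b (m / 2) + (m + b (Nat.log2 m)) % 2 := by
  rw [sig, if_neg h]

theorem sig_half (b : ℕ → ℕ) (m : ℕ) : sig b m / 2 = sig b (m / 2) := by
  by_cases h : m < 2
  · rw [sig_small b h, sig_small b (by omega : m / 2 < 2)]
  · rw [sig_big b h]; omega

theorem sig_zero (b : ℕ → ℕ) (m : ℕ) : sig b m = 0 ↔ m = 0 := by
  induction m using Nat.strong_induction_on with
  | _ m ih =>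
    by_cases h : m < 2
    · rw [sig_small b h]
    · have := ih (m / 2) (by omega)
      rw [← sig_half] at this
      omega

theorem sig_pow (b : ℕ → ℕ) (k m : ℕ) : 2 ^ k ≤ sig b m ↔ 2 ^ k ≤ m := by
  induction k generalizing m with
  | zero =>
    have := sig_zero b m
    simp only [pow_zero]; omega
  | succ k ih =>
    have := ih (m / 2)
    rw [← sig_half] at this
    rw [pow_succ]; omega

theorem sig_log (b : ℕ → ℕ) (m : ℕ) (h : m ≠ 0) : Nat.log2 (sig b m) = Nat.log2 m := by
  have h' : sig b m ≠ 0 := fun h0 => h ((sig_zero b m).1 h0)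
  apply le_antisymm
  · rw [Nat.le_log2 h, ← sig_pow b, ← Nat.le_log2 h']
  · rw [Nat.le_log2 h', sig_pow b, ← Nat.le_log2 h]

theorem sig_sig (b : ℕ → ℕ) (m : ℕ) : sig b (sig b m) = m := by
  induction m using Nat.strong_induction_on with
  | _ m ih =>
    by_cases h : m < 2
    · rw [sig_small b h, sig_small b h]
    · have h1 : ¬ sig b m < 2 := by
        have := sig_pow b 1 m
        omega
      rw [sig_big b h1, sig_half, ih (m / 2) (by omega), sig_log b m (by omega), sig_big b h]
      omega

theorem sig_trans (r j : ℕ) (h1 : 2 ^ r ≤ j) (h2 : j < 2 ^ (r + 1)) :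
    ∃ b, sig b (2 ^ r) = j := by
  refine ⟨fun d => j / 2 ^ (r - d), ?_⟩
  have key : ∀ k ≤ r, sig (fun d => j / 2 ^ (r - d)) (2 ^ k) = j / 2 ^ (r - k) := by
    intro k
    induction k with
    | zero =>
      intro _
      rw [sig_small _ (by norm_num)]
      simp only [pow_zero, Nat.sub_zero]
      symm
      rw [Nat.div_eq_iff (by positivity)]
      rw [pow_succ] at h2
      omega
    | succ k ih =>
      intro hk
      have hp : 0 < 2 ^ k := by positivity
      have e1 : 2 ^ (k + 1) / 2 = 2 ^ k := by rw [pow_succ]; omega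
      rw [sig_big _ (by rw [pow_succ]; omega), e1, ih (by omega), Nat.log2_two_pow]
      have e2 : j / 2 ^ (r - k) = j / 2 ^ (r - (k + 1)) / 2 := by
        rw [Nat.div_div_eq_div_mul, ← pow_succ]
        congr 2
        omega
      rw [e2, pow_succ]
      omega
  simpa using key r le_rfl

/-! ### The core -/

/-- Vertices of the core: two binary trees, ladders between their leaves and two twins. -/
inductive CV (r M : ℕ) : Type
  | nd (a : Bool) (m : Fin (2 ^ (r + 1)))
  | ld (j : Fin (2 ^ r)) (i : Fin M) (e : Bool)
  | tw (e : Bool)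

/-- The core vertices as a sum type. -/
def CV.equiv (r M : ℕ) :
    (Bool × Fin (2 ^ (r + 1))) ⊕ (Fin (2 ^ r) × Fin M × Bool) ⊕ Bool ≃ CV r M where
  toFun u := match u with
    | .inl (a, m) => .nd a m
    | .inr (.inl (j, i, e)) => .ld j i e
    | .inr (.inr e) => .tw e
  invFun u := match u with
    | .nd a m => .inl (a, m)
    | .ld j i e => .inr (.inl (j, i, e))
    | .tw e => .inr (.inr e)
  left_inv := by rintro (⟨a, m⟩ | ⟨j, i, e⟩ | e) <;> rfl
  right_inv := by rintro (⟨a, m⟩ | ⟨j, i, e⟩ | e) <;> rfl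

instance (r M : ℕ) : Fintype (CV r M) := Fintype.ofEquiv _ (CV.equiv r M)

theorem core_card (r M : ℕ) : Fintype.card (CV r M) = 2 * 2 ^ (r + 1) + 2 ^ r * (M * 2) + 2 := by
  rw [← Fintype.card_congr (CV.equiv r M)]
  simp
  ring

/-- The core graph. -/
def core (r M : ℕ) : SimpleGraph (CV r M) where
  Adj u w := match u, w with
    | .nd a m, .nd a' m' => a = a' ∧ ((m.1 ≠ 0 ∧ m'.1 = m.1 / 2) ∨ (m'.1 ≠ 0 ∧ m.1 = m'.1 / 2))
    | .nd a m, .ld j i _ =>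
      m.1 = 2 ^ r + j.1 ∧ ((a = false ∧ i.1 = 0) ∨ (a = true ∧ i.1 + 1 = M))
    | .ld j i _, .nd a m =>
      m.1 = 2 ^ r + j.1 ∧ ((a = false ∧ i.1 = 0) ∨ (a = true ∧ i.1 + 1 = M))
    | .ld j i e, .ld j' i' e' =>
      j.1 = j'.1 ∧ ((i.1 = i'.1 ∧ e ≠ e') ∨ (e = e' ∧ (i.1 + 1 = i'.1 ∨ i'.1 + 1 = i.1)))
    | .nd _ m, .tw _ => m.1 = 0
    | .tw _, .nd _ m => m.1 = 0
    | .ld _ _ _, .tw _ => False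
    | .tw _, .ld _ _ _ => False
    | .tw _, .tw _ => False
  symm := ⟨by
    rintro (⟨a, m⟩ | ⟨j, i, e⟩ | e) (⟨a', m'⟩ | ⟨j', i', e'⟩ | e') h
    · exact ⟨h.1.symm, h.2.symm⟩
    · exact h
    · exact h
    · exact h
    · exact ⟨h.1.symm, h.2.imp (fun h => ⟨h.1.symm, h.2.symm⟩) (fun h => ⟨h.1.symm, h.2.symm⟩)⟩
    · exact h
    · exact h
    · exact h
    · exact h⟩
  loopless := ⟨by
    rintro (⟨a, m⟩ | ⟨j, i, e⟩ | e) h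
    · dsimp only at h; omega
    · dsimp only at h
      rcases h.2 with h | h
      · exact h.2 rfl
      · omega
    · exact h⟩

section core
variable {r M : ℕ}

theorem core_nn (a a' : Bool) (m m' : Fin (2 ^ (r + 1))) :
    (core r M).Adj (.nd a m) (.nd a' m') ↔
      a = a' ∧ ((m.1 ≠ 0 ∧ m'.1 = m.1 / 2) ∨ (m'.1 ≠ 0 ∧ m.1 = m'.1 / 2)) := Iff.rfl
theorem core_nl (a e : Bool) (m : Fin (2 ^ (r + 1))) (j : Fin (2 ^ r)) (i : Fin M) :
    (core r M).Adj (.nd a m) (.ld j i e) ↔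
      m.1 = 2 ^ r + j.1 ∧ ((a = false ∧ i.1 = 0) ∨ (a = true ∧ i.1 + 1 = M)) := Iff.rfl
theorem core_ln (a e : Bool) (m : Fin (2 ^ (r + 1))) (j : Fin (2 ^ r)) (i : Fin M) :
    (core r M).Adj (.ld j i e) (.nd a m) ↔
      m.1 = 2 ^ r + j.1 ∧ ((a = false ∧ i.1 = 0) ∨ (a = true ∧ i.1 + 1 = M)) := Iff.rfl
theorem core_ll (e e' : Bool) (j j' : Fin (2 ^ r)) (i i' : Fin M) :
    (core r M).Adj (.ld j i e) (.ld j' i' e') ↔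
      j.1 = j'.1 ∧ ((i.1 = i'.1 ∧ e ≠ e') ∨ (e = e' ∧ (i.1 + 1 = i'.1 ∨ i'.1 + 1 = i.1))) :=
  Iff.rfl
theorem core_nt (a e : Bool) (m : Fin (2 ^ (r + 1))) :
    (core r M).Adj (.nd a m) (.tw e) ↔ m.1 = 0 := Iff.rfl
theorem core_tn (a e : Bool) (m : Fin (2 ^ (r + 1))) :
    (core r M).Adj (.tw e) (.nd a m) ↔ m.1 = 0 := Iff.rfl
theorem core_lt (e e' : Bool) (j : Fin (2 ^ r)) (i : Fin M) :
    ¬ (core r M).Adj (.ld j i e) (.tw e') := id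
theorem core_tl (e e' : Bool) (j : Fin (2 ^ r)) (i : Fin M) :
    ¬ (core r M).Adj (.tw e') (.ld j i e) := id
theorem core_tt (e e' : Bool) : ¬ (core r M).Adj (.tw e) (.tw e') := id

theorem sig_lt (b : ℕ → ℕ) (k : ℕ) {m : ℕ} (h : m < 2 ^ k) : sig b m < 2 ^ k := by
  have := sig_pow b k m
  omega

/-- The underlying map of the automorphism. -/
def coreMap (b : ℕ → ℕ) : CV r M → CV r M
  | .nd a m => .nd a ⟨sig b m.1, sig_lt b _ m.2⟩
  | .ld j i e => .ld ⟨sig b (2 ^ r + j.1) - 2 ^ r, by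
      have h := sig_lt b (r + 1) (m := 2 ^ r + j.1) (by rw [pow_succ]; omega)
      have : 0 < 2 ^ r := by positivity
      rw [pow_succ] at h
      omega⟩ i e
  | .tw e => .tw e

theorem coreMap_inv (b : ℕ → ℕ) : Function.Involutive (coreMap (r := r) (M := M) b) := by
  rintro (⟨a, m⟩ | ⟨j, i, e⟩ | e)
  · simp [coreMap, sig_sig]
  · have h := (sig_pow b r (2 ^ r + j.1)).2 (by omega)
    simp [coreMap, Nat.add_sub_cancel' h, sig_sig]
  · rfl

theorem coreMap_adj (b : ℕ → ℕ) (u w : CV r M) (h : (core r M).Adj u w) :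
    (core r M).Adj (coreMap b u) (coreMap b w) := by
  rcases u with ⟨a, m⟩ | ⟨j, i, e⟩ | e <;> rcases w with ⟨a', m'⟩ | ⟨j', i', e'⟩ | e'
  · refine ⟨h.1, h.2.imp (fun h => ⟨?_, ?_⟩) (fun h => ⟨?_, ?_⟩)⟩
    · simpa [sig_zero] using h.1
    · simp only [sig_half, h.2]
    · simpa [sig_zero] using h.1
    · simp only [sig_half, h.2]
  · refine ⟨?_, h.2⟩
    have h1 := (sig_pow b r (2 ^ r + j'.1)).2 (by omega)
    have h2 : m.1 = 2 ^ r + j'.1 := h.1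
    simp only [h2]
    omega
  · exact (sig_zero b _).2 h
  · refine ⟨?_, h.2⟩
    have h1 := (sig_pow b r (2 ^ r + j.1)).2 (by omega)
    have h2 : m'.1 = 2 ^ r + j.1 := h.1
    simp only [h2]
    omega
  · refine ⟨?_, h.2⟩
    have h2 : j.1 = j'.1 := h.1
    simp only [h2]
  · exact h
  · exact (sig_zero b _).2 h
  · exact h
  · exact h

/-- Automorphisms of the core. -/
def coreAut (b : ℕ → ℕ) : core r M ≃g core r M where
  toEquiv := (coreMap_inv b).toPerm
  map_rel_iff' := by
    intro u w
    constructor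
    · intro h
      have := coreMap_adj b _ _ h
      simpa only [Function.Involutive.coe_toPerm, coreMap_inv b _] using this
    · exact coreMap_adj b u w

/-- Numbering of the core. -/
def cnum (r M : ℕ) : CV r M → ℕ
  | .nd false m => m.1 + 1
  | .nd true m => 2 * 2 ^ (r + 1) + M + 2 - m.1
  | .ld _ i _ => 2 ^ (r + 1) + 1 + i.1
  | .tw false => 0
  | .tw true => 2 * 2 ^ (r + 1) + M + 3

theorem core_stNum (hM : 1 ≤ M) : StNum (core r M) (.tw false) (.tw true) (cnum r M) := by
  have hp : 0 < 2 ^ r := by positivity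
  have hps : 2 ^ (r + 1) = 2 * 2 ^ r := by rw [pow_succ]; ring
  constructor
  · rintro (⟨a, m⟩ | ⟨j, i, e⟩ | e) h
    · have hm := m.2
      cases a
      · by_cases h0 : m.1 = 0
        · exact ⟨.tw false, by rw [core_nt]; exact h0, by simp [cnum]⟩
        · refine ⟨.nd false ⟨m.1 / 2, by omega⟩, ?_, ?_⟩
          · exact ⟨rfl, Or.inl ⟨h0, rfl⟩⟩
          · simp only [cnum]; omega
      · by_cases h1 : m.1 < 2 ^ r
        · refine ⟨.nd true ⟨2 * m.1 + 1, by omega⟩, ?_, ?_⟩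
          · rw [core_nn]; simp; omega
          · simp only [cnum]; omega
        · refine ⟨.ld ⟨m.1 - 2 ^ r, by omega⟩ ⟨M - 1, by omega⟩ false, ?_, ?_⟩
          · rw [core_nl]; simp; omega
          · simp only [cnum]; omega
    · have hj := j.2
      have hi := i.2
      by_cases h0 : i.1 = 0
      · refine ⟨.nd false ⟨2 ^ r + j.1, by omega⟩, ?_, ?_⟩
        · rw [core_ln]; simp; omega
        · simp only [cnum]; omega
      · refine ⟨.ld j ⟨i.1 - 1, by omega⟩ e, ?_, ?_⟩
        · rw [core_ll]; simp; omega
        · simp only [cnum]; omega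
    · cases e
      · exact absurd rfl h
      · exact ⟨.nd true ⟨0, by positivity⟩, by rw [core_tn], by simp [cnum]⟩
  · rintro (⟨a, m⟩ | ⟨j, i, e⟩ | e) h
    · have hm := m.2
      cases a
      · by_cases h1 : m.1 < 2 ^ r
        · refine ⟨.nd false ⟨2 * m.1 + 1, by omega⟩, ?_, ?_⟩
          · rw [core_nn]; simp; omega
          · simp only [cnum]; omega
        · refine ⟨.ld ⟨m.1 - 2 ^ r, by omega⟩ ⟨0, by omega⟩ false, ?_, ?_⟩
          · rw [core_nl]; simp; omega
          · simp only [cnum]; omega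
      · by_cases h0 : m.1 = 0
        · refine ⟨.tw true, by rw [core_nt]; exact h0, ?_⟩
          simp only [cnum]; omega
        · refine ⟨.nd true ⟨m.1 / 2, by omega⟩, ?_, ?_⟩
          · exact ⟨rfl, Or.inl ⟨h0, rfl⟩⟩
          · simp only [cnum]; omega
    · have hj := j.2
      have hi := i.2
      by_cases h0 : i.1 + 1 = M
      · refine ⟨.nd true ⟨2 ^ r + j.1, by omega⟩, ?_, ?_⟩
        · rw [core_ln]; simp; omega
        · simp only [cnum]; omega
      · refine ⟨.ld j ⟨i.1 + 1, by omega⟩ e, ?_, ?_⟩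
        · rw [core_ll]; simp
        · simp only [cnum]; omega
    · cases e
      · exact ⟨.nd false ⟨0, by positivity⟩, by rw [core_tn], by simp [cnum]⟩
      · exact absurd rfl h

theorem core_deg2 (e : Bool) : Deg2 (core r M) (.tw e) := by
  refine ⟨.nd false ⟨0, by positivity⟩, .nd true ⟨0, by positivity⟩, by simp, ?_⟩
  rintro (⟨a, m⟩ | ⟨j, i, e⟩ | e)
  · rw [core_tn]
    simp only [CV.nd.injEq, Fin.ext_iff]
    cases a <;> simp
  · simp [core_tl]
  · simp [core_tt]

theorem core_deg3 (hM : 2 ≤ M) (u : CV r M) (h1 : u ≠ .tw false) (h2 : u ≠ .tw true) :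
    Deg3 (core r M) u := by
  have hp : 0 < 2 ^ r := by positivity
  have hps : 2 ^ (r + 1) = 2 * 2 ^ r := by rw [pow_succ]; ring
  rcases u with ⟨a, m⟩ | ⟨j, i, e⟩ | e
  · have hm := m.2
    by_cases h0 : m.1 = 0
    · refine ⟨.tw false, .tw true, .nd a ⟨1, by omega⟩, by simp, by simp, by simp, ?_⟩
      rintro (⟨a', m'⟩ | ⟨j, i, e⟩ | e)
      · rw [core_nn]
        simp only [CV.nd.injEq, Fin.ext_iff, reduceCtorEq, false_or, eq_comm (a := a)]
        refine and_congr_right fun _ => ?_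
        omega
      · rw [core_nl]; simp; omega
      · rw [core_nt]; cases e <;> simp [h0]
    by_cases hl : m.1 < 2 ^ r
    · refine ⟨.nd a ⟨m.1 / 2, by omega⟩, .nd a ⟨2 * m.1, by omega⟩, .nd a ⟨2 * m.1 + 1, by omega⟩,
        by simp; omega, by simp; omega, by simp, ?_⟩
      rintro (⟨a', m'⟩ | ⟨j, i, e⟩ | e)
      · rw [core_nn]
        simp only [CV.nd.injEq, Fin.ext_iff, eq_comm (a := a), ← and_or_left]
        refine and_congr_right fun _ => ?_
        omega
      · rw [core_nl]; simp; omega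
      · rw [core_nt]; simp [h0]
    · refine ⟨.nd a ⟨m.1 / 2, by omega⟩,
        .ld ⟨m.1 - 2 ^ r, by omega⟩ ⟨if a then M - 1 else 0, by split <;> omega⟩ false,
        .ld ⟨m.1 - 2 ^ r, by omega⟩ ⟨if a then M - 1 else 0, by split <;> omega⟩ true,
        by simp, by simp, by simp, ?_⟩
      rintro (⟨a', m'⟩ | ⟨j, i, e⟩ | e)
      · rw [core_nn]
        have hm' := m'.2
        simp only [CV.nd.injEq, Fin.ext_iff, reduceCtorEq, or_false, eq_comm (a := a)]
        refine and_congr_right fun _ => ?_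
        omega
      · rw [core_nl]
        simp only [CV.ld.injEq, Fin.ext_iff, reduceCtorEq, false_or]
        cases a <;> cases e <;> simp <;> omega
      · rw [core_nt]; simp [h0]
  · have hj := j.2
    have hi := i.2
    by_cases hi0 : i.1 = 0
    · refine ⟨.ld j i (!e), .ld j ⟨1, by omega⟩ e, .nd false ⟨2 ^ r + j.1, by omega⟩, by simp,
        by simp, by simp, ?_⟩
      rintro (⟨a', m'⟩ | ⟨j', i', e'⟩ | e')
      · rw [core_ln]
        simp only [CV.nd.injEq, Fin.ext_iff, reduceCtorEq, false_or]
        cases a' <;> simp <;> omega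
      · rw [core_ll]
        simp only [CV.ld.injEq, Fin.ext_iff, reduceCtorEq, or_false]
        cases e <;> cases e' <;> simp <;> omega
      · simp [core_lt]
    by_cases hi1 : i.1 + 1 = M
    · refine ⟨.ld j i (!e), .ld j ⟨i.1 - 1, by omega⟩ e, .nd true ⟨2 ^ r + j.1, by omega⟩, by simp,
        by simp, by simp, ?_⟩
      rintro (⟨a', m'⟩ | ⟨j', i', e'⟩ | e')
      · rw [core_ln]
        simp only [CV.nd.injEq, Fin.ext_iff, reduceCtorEq, false_or]
        cases a' <;> simp <;> omega
      · rw [core_ll]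
        simp only [CV.ld.injEq, Fin.ext_iff, reduceCtorEq, or_false]
        cases e <;> cases e' <;> simp <;> omega
      · simp [core_lt]
    · refine ⟨.ld j i (!e), .ld j ⟨i.1 - 1, by omega⟩ e, .ld j ⟨i.1 + 1, by omega⟩ e, by simp,
        by simp, by simp, ?_⟩
      rintro (⟨a', m'⟩ | ⟨j', i', e'⟩ | e')
      · rw [core_ln]
        simp only [reduceCtorEq, or_false, iff_false]
        rintro ⟨_, ⟨_, h⟩ | ⟨_, h⟩⟩ <;> omega
      · rw [core_ll]
        simp only [CV.ld.injEq, Fin.ext_iff]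
        cases e <;> cases e' <;> simp <;> omega
      · simp [core_lt]
  · cases e
    · exact absurd rfl h1
    · exact absurd rfl h2

end core
section core
variable {r M : ℕ}

/-- The distinguished leaf. -/
def vtx (r M : ℕ) : CV r M := .nd false ⟨2 ^ r, by rw [pow_succ]; have : 0 < 2 ^ r := by positivity
                                                   omega⟩

theorem core_htw (z : CV r M) : (core r M).Adj (.tw false) z ↔ (core r M).Adj (.tw true) z := by
  rcases z with ⟨a, m⟩ | ⟨j, i, e⟩ | e <;> rfl

/-- Root of the first tree. -/
def rootA (r M : ℕ) : CV r M := .nd false ⟨0, by positivity⟩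

theorem rootA_adj (e : Bool) : (core r M).Adj (.tw e) (rootA r M) := by
  rw [rootA, core_tn]

theorem rootA_ne : rootA r M ≠ vtx r M := by
  have : 0 < 2 ^ r := by positivity
  simp [rootA, vtx]

theorem core_delete_connected (hM : 1 ≤ M) : (deleteVertex (core r M) (vtx r M)).Connected := by
  refine (core_stNum hM).delete_connected (by simp) _ (fun hs ht => ?_)
  have h1 : (deleteVertex (core r M) (vtx r M)).Adj ⟨.tw false, hs⟩ ⟨rootA r M, rootA_ne⟩ :=
    rootA_adj (r := r) (M := M) false
  have h2 : (deleteVertex (core r M) (vtx r M)).Adj ⟨.tw true, ht⟩ ⟨rootA r M, rootA_ne⟩ :=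
    rootA_adj (r := r) (M := M) true
  exact h1.reachable.trans h2.symm.reachable

theorem core_connected (hM : 1 ≤ M) : (core r M).Connected := by
  have hc := core_delete_connected (r := r) hM
  rw [connected_iff_exists_forall_reachable]
  refine ⟨.tw false, fun w => ?_⟩
  have hx : CV.tw false ≠ vtx r M := by simp [vtx]
  have key : ∀ w, w ≠ vtx r M → (core r M).Reachable (.tw false) w := by
    intro w hw
    exact (hc.preconnected ⟨.tw false, hx⟩ ⟨w, hw⟩).map
      (⟨Subtype.val, fun h => h⟩ : deleteVertex (core r M) (vtx r M) →g core r M)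
  by_cases hw : w = vtx r M
  · obtain ⟨z, hz, -⟩ := (core_stNum (r := r) hM).1 w (by rw [hw]; exact hx.symm)
    refine (key z ?_).trans hz.symm.reachable
    rintro rfl
    rw [hw] at hz
    exact (core r M).loopless.irrefl _ hz
  · exact key w hw

theorem core_dist_node (hM : 1 ≤ M) (k : ℕ) (hk : 2 ^ k < 2 ^ (r + 1)) :
    (core r M).dist (.tw false) (.nd false ⟨2 ^ k, hk⟩) ≤ k + 2 := by
  have hc := core_connected (r := r) hM
  induction k with
  | zero =>
    have h1 := dist_lip hc (.tw false) _ _ (rootA_adj false)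
    have h2 : (core r M).Adj (rootA r M) (.nd false ⟨2 ^ 0, hk⟩) := by
      rw [rootA, core_nn]; simp
    have h3 := dist_lip hc (.tw false) _ _ h2
    simp only [dist_self] at h1
    omega
  | succ k ih =>
    have hp : 0 < 2 ^ k := by positivity
    have hk' : 2 ^ k < 2 ^ (r + 1) := by rw [pow_succ] at hk; omega
    have h2 : (core r M).Adj (.nd false ⟨2 ^ k, hk'⟩) (.nd false ⟨2 ^ (k + 1), hk⟩) := by
      rw [core_nn]
      refine ⟨rfl, Or.inr ⟨by simp, ?_⟩⟩
      simp only [pow_succ]; omega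
    have h3 := dist_lip hc (.tw false) _ _ h2
    have := ih hk'
    omega

theorem core_dist_ladder (hM : 1 ≤ M) (i : ℕ) (hi : i < M) :
    (core r M).dist (.tw false) (.ld ⟨0, by positivity⟩ ⟨i, hi⟩ false) ≤ r + 3 + i := by
  have hc := core_connected (r := r) hM
  induction i with
  | zero =>
    have h1 : (core r M).dist (.tw false) (vtx r M) ≤ r + 2 := core_dist_node hM r _
    have h2 : (core r M).Adj (vtx r M) (.ld ⟨0, by positivity⟩ ⟨0, hi⟩ false) := by
      rw [vtx, core_nl]; simp
    have h3 := dist_lip hc (.tw false) _ _ h2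
    omega
  | succ i ih =>
    have h2 : (core r M).Adj (.ld ⟨0, by positivity⟩ ⟨i, by omega⟩ false)
        (.ld ⟨0, by positivity⟩ ⟨i + 1, hi⟩ false) := by
      rw [core_ll]; simp
    have h3 := dist_lip hc (.tw false) _ _ h2
    have := ih (by omega)
    omega

/-- Lower bound potential after the deletion of the leaf. -/
def cpot (r M : ℕ) : CV r M → ℕ
  | .ld j i _ => if j.1 = 0 then M - i.1 else 0
  | _ => 0

theorem cpot_lip (u w : {u : CV r M // u ≠ vtx r M})
    (h : (deleteVertex (core r M) (vtx r M)).Adj u w) : cpot r M w ≤ cpot r M u + 1 := by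
  obtain ⟨u, hu⟩ := u
  obtain ⟨w, hw⟩ := w
  have h : (core r M).Adj u w := h
  rcases w with ⟨a', m'⟩ | ⟨j', i', e'⟩ | e'
  · simp [cpot]
  · rcases u with ⟨a, m⟩ | ⟨j, i, e⟩ | e
    · rw [core_nl] at h
      simp only [cpot]
      split
      · rename_i hj
        rcases h.2 with ⟨rfl, h2⟩ | ⟨rfl, h2⟩
        · exact absurd (by simp only [vtx, CV.nd.injEq, Fin.ext_iff, true_and]; omega) hu
        · omega
      · omega
    · rw [core_ll] at h
      simp only [cpot]
      split <;> split <;> omega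
    · exact absurd h (core_tl _ _ _ _)
  · simp [cpot]

theorem ld_ne (j : Fin (2 ^ r)) (i : Fin M) (e : Bool) : CV.ld j i e ≠ vtx r M := by simp [vtx]

theorem tw_ne (e : Bool) : CV.tw e ≠ vtx r M := by simp [vtx]

theorem core_delta (K : ℕ) (hK : r + 3 ≤ K) (hM : M = 4 * K) :
    K * K ≤ ∑ c : {c : CV r M // c ≠ vtx r M},
      ((deleteVertex (core r M) (vtx r M)).dist c ⟨.tw false, tw_ne false⟩ -
        (core r M).dist c (.tw false)) := by
  have hM1 : 1 ≤ M := by omega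
  have hd := core_delete_connected (r := r) hM1
  let g : Fin K ↪ {c : CV r M // c ≠ vtx r M} :=
    ⟨fun i => ⟨.ld ⟨0, by positivity⟩ ⟨i.1, by omega⟩ false, ld_ne _ _ _⟩, by
      intro a b h
      simpa [Fin.ext_iff] using h⟩
  calc K * K = ∑ i : Fin K, K := by simp
    _ ≤ ∑ i : Fin K, ((deleteVertex (core r M) (vtx r M)).dist (g i) ⟨.tw false, tw_ne false⟩ -
        (core r M).dist (g i) (.tw false)) := by
      refine Finset.sum_le_sum fun i _ => ?_
      have h1 := core_dist_ladder (r := r) hM1 i.1 (by omega)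
      have h2 := dist_ge_of_lipschitz (fun u : {c : CV r M // c ≠ vtx r M} => cpot r M u) cpot_lip
        (hd.preconnected ⟨.tw false, tw_ne false⟩ (g i))
      have h3 : cpot r M (g i) = M - i.1 := by simp [g, cpot]
      have h4 : cpot r M (.tw false) = 0 := rfl
      simp only [h3, h4] at h2
      rw [dist_comm, (core r M).dist_comm]
      have h5 : (core r M).dist (.tw false) (g i) ≤ r + 3 + i.1 := h1
      have := i.2
      omega
    _ = ∑ c ∈ Finset.univ.map g, _ := (Finset.sum_map Finset.univ g
        (fun c => (deleteVertex (core r M) (vtx r M)).dist c ⟨.tw false, tw_ne false⟩ -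
        (core r M).dist c (.tw false))).symm
    _ ≤ _ := Finset.sum_le_sum_of_subset (Finset.subset_univ _)

end core

/-! ### Assembly -/

theorem TwoConnected.iso {V W : Type*} [Fintype V] [Fintype W] {G : SimpleGraph V}
    {G' : SimpleGraph W} (φ : G ≃g G') (h : TwoConnected G) : TwoConnected G' := by
  refine ⟨φ.connected_iff.1 h.1, ?_, fun v => ?_⟩
  · rw [← Fintype.card_congr φ.toEquiv]; exact h.2.1
  · obtain ⟨u, rfl⟩ := φ.surjective v
    exact (deleteIso φ u).connected_iff.1 (h.2.2 u)

theorem IsCubic.iso {V W : Type*} {G : SimpleGraph V}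
    {G' : SimpleGraph W} (φ : G ≃g G') (h : IsCubic G) : IsCubic G' := by
  intro v
  rw [← h (φ.symm v)]
  exact Set.ncard_congr' (φ.symm.mapNeighborSet v)

theorem main_aux (r N : ℕ) : ∃ (V : Type) (_ : Fintype V) (G : SimpleGraph V),
    N < Fintype.card V ∧ IsCubic G ∧ TwoConnected G ∧
      ∃ S : Finset V, 2 ^ r ≤ S.card ∧ ∀ v ∈ S, IsSoltes G v := by
  classical
  -- parameters
  obtain ⟨K, hKdef⟩ : ∃ K, K = 40 * 2 ^ r + N + 10 := ⟨_, rfl⟩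
  obtain ⟨M, hM⟩ : ∃ M, M = 4 * K := ⟨_, rfl⟩
  have hp : 0 < 2 ^ r := by positivity
  have hr2 : r < 2 ^ r := Nat.lt_two_pow_self
  have hH := core_connected (r := r) (M := M) (by omega)
  have hHv := core_delete_connected (r := r) (M := M) (by omega)
  have hdelta := core_delta (r := r) (M := M) K (by omega) hM
  have hcard := core_card r M
  obtain ⟨n, hn⟩ : ∃ n, n = Fintype.card (CV r M) := ⟨_, rfl⟩
  rw [← hn] at hcard
  have hdv : (core r M).dist (vtx r M) (.tw false) < n := hn ▸ dist_lt_card' hH _ _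
  have hn2 : 2 * n + 5 ≤ K * K := by
    rw [hcard, hM, pow_succ]
    nlinarith
  obtain ⟨Δ, hΔ⟩ : ∃ Δ, Δ = ∑ c : {c : CV r M // c ≠ vtx r M},
      ((deleteVertex (core r M) (vtx r M)).dist c ⟨.tw false, tw_ne false⟩ -
        (core r M).dist c (.tw false)) := ⟨_, rfl⟩
  rw [← hΔ] at hdelta
  obtain ⟨β, hβ⟩ : ∃ β, Δ = β + ((core r M).dist (vtx r M) (.tw false) + 1) :=
    ⟨Δ - ((core r M).dist (vtx r M) (.tw false) + 1), by omega⟩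
  have hβn : n ≤ β := by omega
  have hβ4 : 4 ≤ β := by omega
  have hw := wsum_delete hH hHv
  rw [← hn] at hw
  obtain ⟨w1, hw1⟩ := wsum_even (core r M)
  obtain ⟨w2, hw2⟩ := wsum_even (deleteVertex (core r M) (vtx r M))
  have hE : -(β : ℤ) ^ 2 ≤ (w2 : ℤ) - w1 := by
    have h1 : w1 ≤ w2 + n ^ 2 := by omega
    have h2 : n ^ 2 ≤ β ^ 2 := Nat.pow_le_pow_left hβn 2
    have h3 : w1 ≤ w2 + β ^ 2 := by omega
    zify at h3
    linarith
  obtain ⟨L, i, b, hi, hL, hsum⟩ := tail_exists β hβ4 _ hE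
  have hsum' : w2 + β * Fintype.card (TV L) = w1 + ∑ u, tlev L i b u := by
    zify
    push_cast at hsum
    linarith
  have hst := tail_st (b := b) hi hL
  have hKc := tail_connected (b := b) hi hL
  -- the distinguished vertex is a Šoltés vertex
  have hS0 : IsSoltes (glue (core r M) (tail L i b) (.tw false) (.tw true)
      (.rail 0 false) (.rail 0 true)) (.inl (vtx r M)) := by
    refine soltes_glue hH hHv hKc hst (tw_ne false) (tw_ne true) (by simp) (core_tt _ _) core_htw
      (rootA r M) (rootA_adj false) rootA_ne (tlev L i b) (tail_dist hi hL) ?_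
    rw [← hΔ, hw1, hw2, hβ]
    have : Fintype.card (TV L) * (β + ((core r M).dist (vtx r M) (.tw false) + 1)) =
      β * Fintype.card (TV L) +
        Fintype.card (TV L) * ((core r M).dist (vtx r M) (.tw false) + 1) := by ring
    rw [this]
    omega
  have hd1 : (core r M).dist (.tw false) (.tw true) ≤ 2 :=
    (twin_dist_two hH (by simp) (core_tt _ _) _ (rootA_adj false) (rootA_adj true)).le
  have hd2 : (tail L i b).dist (.rail 0 false) (.rail 0 true) ≤ 2 := by
    rw [dist_eq_one_iff_adj.2 hst]; omega
  have hMc : M ≤ Fintype.card (CV r M) := by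
    have : M * 2 ≤ 2 ^ r * (M * 2) := Nat.le_mul_of_pos_left _ hp
    rw [← hn, hcard]; omega
  refine ⟨CV r M ⊕ TV L, inferInstance, glue (core r M) (tail L i b) (.tw false) (.tw true)
      (.rail 0 false) (.rail 0 true), ?_, ?_, ⟨?_, ?_, ?_⟩, ?_⟩
  · rw [Fintype.card_sum]; omega
  · exact glue_cubic (by simp) (by simp) (core_deg2 _) (core_deg2 _) (tail_deg2 hi hL _)
      (tail_deg2 hi hL _) (core_deg3 (by omega)) (tail_deg3 hi hL)
  · exact glue_connected hH hKc hd1 hd2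
  · rw [Fintype.card_sum]; omega
  · intro v
    obtain ⟨h, hh⟩ := glue_stNum (core_stNum (r := r) (M := M) (by omega))
      (tail_stNum (b := b) hi hL) (by simp [tnum]) (by simp [tnum])
    refine hh.delete_connected (by simp) v (fun hs ht => ?_)
    have : (deleteVertex (glue (core r M) (tail L i b) (.tw false) (.tw true)
      (.rail 0 false) (.rail 0 true)) v).Adj ⟨.inr (.rail 0 false), hs⟩
      ⟨.inr (.rail 0 true), ht⟩ := hst
    exact this.reachable
  · let g : Fin (2 ^ r) ↪ CV r M ⊕ TV L :=
      ⟨fun j => .inl (.nd false ⟨2 ^ r + j.1, by rw [pow_succ]; omega⟩), by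
        intro a b h
        simpa [Fin.ext_iff] using h⟩
    refine ⟨Finset.univ.map g, by simp, ?_⟩
    intro v hv
    rw [Finset.mem_map] at hv
    obtain ⟨j, -, rfl⟩ := hv
    obtain ⟨c, hc⟩ := sig_trans r (2 ^ r + j.1) (by omega) (by rw [pow_succ]; omega)
    have := hS0.iso (glueAut (tail L i b) (.rail 0 false) (.rail 0 true)
      (coreAut (r := r) (M := M) c) rfl rfl)
    convert this using 1
    show Sum.inl _ = Sum.inl (coreMap c (vtx r M))
    simp [vtx, coreMap, hc]

/-- For every `r ≥ 1` and every `N` there is a cubic, 2-connected,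
connected simple graph on more than `N` vertices with at least `2 ^ r` distinct Šoltés
vertices; hence for every `r ≥ 1` there are infinitely many such graphs. -/
theorem exists_cubic_twoConnected_with_two_pow_soltes_vertices (r : ℕ) (hr : 1 ≤ r) (N : ℕ) :
    ∃ (n : ℕ) (G : SimpleGraph (Fin n)),
      N < n ∧ G.Connected ∧ IsCubic G ∧ TwoConnected G ∧
      ∃ S : Finset (Fin n), 2 ^ r ≤ S.card ∧ ∀ v ∈ S, IsSoltes G v := by
  obtain ⟨V, _, G, hN, hcub, h2, S, hS, hsol⟩ := main_aux r N
  let e := Fintype.equivFin V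
  let φ : G ≃g G.map e.toEmbedding := SimpleGraph.Iso.map e G
  refine ⟨Fintype.card V, G.map e.toEmbedding, hN, φ.connected_iff.1 h2.1, hcub.iso φ, h2.iso φ,
    S.map e.toEmbedding, by simpa using hS, ?_⟩
  intro v hv
  rw [Finset.mem_map] at hv
  obtain ⟨u, hu, rfl⟩ := hv
  exact (hsol u hu).iso φ
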